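/- For every N >= 2: if an FTNS system is FTNS strongly hyperbolic, then it admits a strongly hyperbolic FT(N-1)S reduction. Precisely: there exist a choice of reduction parameters (one may take (D^0)^k = -(A^0_0)^k, D_i^k = -B^0_{1,0} delta_i^k, (D^mu)^{k_1...k_mu} = -(B^mu_{1,0})^{k_1...k_mu} for mu = 1,...,N-1, all Dbar parameters zero except Dbar_i^{kj} = i*lambda*epsilon_i^{kj} with epsilon the Levi-Civita symbol and lambda a real number larger than sup over unit s of the operator norm of P_N(s)) and a constant K > 0 such that for every unit s in R^3 there is an invertible T(s) with ||T(s)|| <= K, ||T(s)^{-1}|| <= K and T(s)^{-1} P_{N-1}(s) T(s) a real diagonal matrix; in particular the system is FT(N-1)S strongly hyperbolic. -/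

import Mathlib

open Matrix
open scoped ComplexOrder

/-- The Loewner order `A ≤ B` for complex matrices: `B - A` is positive semidefinite. -/
def loewnerLE {n : Type*} [Fintype n] (A B : Matrix n n ℂ) : Prop := (B - A).PosSemidef

/-- The spectral (ℓ²-operator) norm of a complex matrix. -/
noncomputable def matOpNorm {n : Type*} [Fintype n] [DecidableEq n] (M : Matrix n n ℂ) : ℝ :=
  ‖Matrix.toEuclideanCLM (𝕜 := ℂ) M‖

/-- The Levi-Civita symbol on three indices with `lev 0 1 2 = 1`. -/
noncomputable def lev (a b c : Fin 3) : ℝ :=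
  if (a, b, c) = (0, 1, 2) ∨ (a, b, c) = (1, 2, 0) ∨ (a, b, c) = (2, 0, 1) then 1
  else if (a, b, c) = (2, 1, 0) ∨ (a, b, c) = (0, 2, 1) ∨ (a, b, c) = (1, 0, 2) then -1
  else 0

/-- Index type for the FTNS state `(v⁰, …, v^{N-1})`. -/
abbrev IN (N : ℕ) (n : ℕ → ℕ) : Type := Σ μ : Fin N, Fin (n μ)

/-- Index type for the FT(N-1)S reduction state `(dᵢ; v⁰, v¹, …, v^{N-1})`. -/
abbrev INm1 (N : ℕ) (n : ℕ → ℕ) : Type := (Fin 3 × Fin (n 0)) ⊕ IN N n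

variable (N : ℕ) (n : ℕ → ℕ)
  (A : (μ ν : ℕ) → (Fin (μ - ν + 1) → Fin 3) → Matrix (Fin (n μ)) (Fin (n ν)) ℂ)
  (A' : (μ : ℕ) → Matrix (Fin (n μ)) (Fin (n (μ + 1))) ℂ)
  (B10 : (μ : ℕ) → (Fin μ → Fin 3) → Matrix (Fin (n μ)) (Fin (n 0)) ℂ)

/-- The FTNS principal symbol `P_N(s)`. -/
noncomputable def PN (s : Fin 3 → ℝ) : Matrix (IN N n) (IN N n) ℂ :=
  Matrix.of fun r c =>
    if h1 : (c.1 : ℕ) ≤ (r.1 : ℕ) then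
      ∑ k : Fin ((r.1 : ℕ) - (c.1 : ℕ) + 1) → Fin 3,
        (∏ t, (s (k t) : ℂ)) * A r.1 c.1 k r.2 c.2
    else if h2 : (c.1 : ℕ) = (r.1 : ℕ) + 1 then
      A' r.1 r.2 (Fin.cast (congrArg n h2) c.2)
    else 0

/-- The principal symbol `P_{N-1}(s)` of the FT(N-1)S reduction, in the variables
`(v⁰, dᵢ, v¹, …, v^{N-1})`, with reduction parameters
`D⁰, D̄⁰, Dᵢ^k, D̄ᵢ^{kj}, D^μ, D̄^μ`. -/
noncomputable def PNm1
    (D0 : Fin 3 → Matrix (Fin (n 0)) (Fin (n 0)) ℂ)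
    (Dbar0 : Fin 3 → Fin 3 → Matrix (Fin (n 0)) (Fin (n 0)) ℂ)
    (Dd : Fin 3 → Fin 3 → Matrix (Fin (n 0)) (Fin (n 0)) ℂ)
    (Dbard : Fin 3 → Fin 3 → Fin 3 → Matrix (Fin (n 0)) (Fin (n 0)) ℂ)
    (DH : (μ : ℕ) → (Fin μ → Fin 3) → Matrix (Fin (n μ)) (Fin (n 0)) ℂ)
    (DbarH : (μ : ℕ) → (Fin (μ - 1) → Fin 3) → Fin 3 → Fin 3 →
      Matrix (Fin (n μ)) (Fin (n 0)) ℂ)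
    (s : Fin 3 → ℝ) : Matrix (INm1 N n) (INm1 N n) ℂ :=
  Matrix.of fun r c =>
    match r, c with
    | Sum.inl (i, m), Sum.inl (j, m') =>
        (s i : ℂ) * A 0 0 (fun _ => j) m m' + ∑ k, (s k : ℂ) * Dbard i k j m m'
    | Sum.inl (i, m), Sum.inr ⟨ν, q⟩ =>
        if h0 : (ν : ℕ) = 0 then
          ∑ k, (s k : ℂ) *
            ((if i = k then B10 0 Fin.elim0 else 0) + Dd i k) m (Fin.cast (congrArg n h0) q)
        else if h1 : (ν : ℕ) = 1 then
          (s i : ℂ) * A' 0 m (Fin.cast (congrArg n h1) q)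
        else 0
    | Sum.inr ⟨μ, m⟩, Sum.inl (j, m') =>
        if h0 : (μ : ℕ) = 0 then
          ∑ k, (s k : ℂ) * Dbar0 k j (Fin.cast (congrArg n h0) m) m'
        else
          (∑ K : Fin (μ : ℕ) → Fin 3, (∏ t, (s (K t) : ℂ)) *
              A μ 0 (fun t : Fin ((μ : ℕ) - 0 + 1) =>
                if h : (t : ℕ) < (μ : ℕ) then K ⟨t, h⟩ else j) m m')
            + (∑ K : Fin ((μ : ℕ) - 1) → Fin 3, ∑ a, (∏ t, (s (K t) : ℂ)) * (s a : ℂ) *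
                DbarH μ K a j m m')
    | Sum.inr ⟨μ, m⟩, Sum.inr ⟨ν, q⟩ =>
        if h0 : (μ : ℕ) = 0 then
          (if hc : (ν : ℕ) = 0 then
            ∑ k, (s k : ℂ) *
              (A 0 0 (fun _ => k) + D0 k) (Fin.cast (congrArg n h0) m)
                (Fin.cast (congrArg n hc) q)
          else 0)
        else if hc : (ν : ℕ) = 0 then
          ∑ K : Fin (μ : ℕ) → Fin 3, (∏ t, (s (K t) : ℂ)) *
            ((B10 μ K + DH μ K) m (Fin.cast (congrArg n hc) q))
        else PN N n A A' s ⟨μ, m⟩ ⟨ν, q⟩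

section NormBounds

open scoped Matrix.Norms.L2Operator

theorem isHermitian_ofReal_smul_one {ι : Type*} [DecidableEq ι] (c : ℝ) :
    ((c : ℂ) • (1 : Matrix ι ι ℂ)).IsHermitian := by
  simp [Matrix.IsHermitian, conjTranspose_smul]

variable {ι κ : Type*} [Fintype ι] [Fintype κ]

theorem star_dotProduct_self_eq_norm_sq (x : ι → ℂ) :
    star x ⬝ᵥ x = ((‖WithLp.toLp 2 x‖ ^ 2 : ℝ) : ℂ) := by
  rw [EuclideanSpace.norm_sq_eq, dotProduct]
  push_cast
  refine Finset.sum_congr rfl fun i _ => ?_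
  exact Complex.conj_mul' (x i)

theorem star_dotProduct_conj_mulVec (G : Matrix κ ι ℂ) (H : Matrix κ κ ℂ) (x : ι → ℂ) :
    star x ⬝ᵥ ((Gᴴ * H * G) *ᵥ x) = star (G *ᵥ x) ⬝ᵥ (H *ᵥ (G *ᵥ x)) := by
  rw [star_mulVec, ← dotProduct_mulVec, mulVec_mulVec, mulVec_mulVec, Matrix.mul_assoc]

theorem Matrix.IsHermitian.star_dotProduct_mulVec_eq_re {H : Matrix ι ι ℂ} (hH : H.IsHermitian)
    (x : ι → ℂ) : star x ⬝ᵥ (H *ᵥ x) = ((star x ⬝ᵥ (H *ᵥ x)).re : ℂ) :=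
  Complex.ext rfl (hH.im_star_dotProduct_mulVec_self x)

theorem star_dotProduct_smul_one_mulVec [DecidableEq ι] (c : ℝ) (x : ι → ℂ) :
    star x ⬝ᵥ (((c : ℂ) • (1 : Matrix ι ι ℂ)) *ᵥ x) = ((c * ‖WithLp.toLp 2 x‖ ^ 2 : ℝ) : ℂ) := by
  rw [smul_mulVec, one_mulVec, dotProduct_smul, star_dotProduct_self_eq_norm_sq]
  simp

theorem loewnerLE_smul_one_iff [DecidableEq ι] {H : Matrix ι ι ℂ} (hH : H.IsHermitian) (c : ℝ) :
    loewnerLE H ((c : ℂ) • 1) ↔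
      ∀ x : ι → ℂ, (star x ⬝ᵥ (H *ᵥ x)).re ≤ c * ‖WithLp.toLp 2 x‖ ^ 2 := by
  rw [loewnerLE, posSemidef_iff_dotProduct_mulVec]
  refine (and_iff_right ((isHermitian_ofReal_smul_one c).sub hH)).trans (forall_congr' fun x => ?_)
  rw [sub_mulVec, dotProduct_sub, star_dotProduct_smul_one_mulVec,
    hH.star_dotProduct_mulVec_eq_re x, sub_nonneg, Complex.real_le_real, Complex.ofReal_re]

theorem smul_one_loewnerLE_iff [DecidableEq ι] {H : Matrix ι ι ℂ} (hH : H.IsHermitian) (c : ℝ) :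
    loewnerLE ((c : ℂ) • 1) H ↔
      ∀ x : ι → ℂ, c * ‖WithLp.toLp 2 x‖ ^ 2 ≤ (star x ⬝ᵥ (H *ᵥ x)).re := by
  rw [loewnerLE, posSemidef_iff_dotProduct_mulVec]
  refine (and_iff_right (hH.sub (isHermitian_ofReal_smul_one c))).trans (forall_congr' fun x => ?_)
  rw [sub_mulVec, dotProduct_sub, star_dotProduct_smul_one_mulVec,
    hH.star_dotProduct_mulVec_eq_re x, sub_nonneg, Complex.real_le_real, Complex.ofReal_re]

theorem norm_mulVec_le_of_norm_le [DecidableEq ι] {G : Matrix κ ι ℂ} {K : ℝ} (hG : ‖G‖ ≤ K)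
    (x : ι → ℂ) :
    ‖WithLp.toLp 2 (G *ᵥ x)‖ ≤ K * ‖WithLp.toLp 2 x‖ :=
  (l2_opNorm_mulVec G (WithLp.toLp 2 x)).trans (by gcongr)

theorem norm_mul_le_of_norm_le [DecidableEq ι] [DecidableEq κ] {τ : Type*} [Fintype τ]
    {F : Matrix τ κ ℂ} {G : Matrix κ ι ℂ} {a b : ℝ} (hF : ‖F‖ ≤ a) (hG : ‖G‖ ≤ b) :
    ‖F * G‖ ≤ a * b :=
  (l2_opNorm_mul F G).trans
    (mul_le_mul hF hG (norm_nonneg _) ((norm_nonneg _).trans hF))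

theorem norm_le_sqrt_of_norm_mulVec_sq_le [DecidableEq ι] {T : Matrix ι ι ℂ} {M : ℝ}
    (h : ∀ x : ι → ℂ, ‖WithLp.toLp 2 (T *ᵥ x)‖ ^ 2 ≤ M * ‖WithLp.toLp 2 x‖ ^ 2) :
    ‖T‖ ≤ √M := by
  rw [l2_opNorm_def]
  refine ContinuousLinearMap.opNorm_le_bound _ (Real.sqrt_nonneg _) fun x => ?_
  have hx := Real.sqrt_le_sqrt (h x.ofLp)
  rwa [Real.sqrt_sq (norm_nonneg _), Real.sqrt_mul' _ (sq_nonneg _),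
    Real.sqrt_sq (norm_nonneg _)] at hx

open scoped MatrixOrder in
theorem exists_conjTranspose_mul_mul_eq_one [DecidableEq ι] {H : Matrix ι ι ℂ} (hH : H.PosDef) :
    ∃ T : Matrix ι ι ℂ, Tᴴ * H * T = 1 := by
  obtain ⟨B, hB⟩ := CStarAlgebra.nonneg_iff_eq_star_mul_self.mp
    (nonneg_iff_posSemidef.mpr hH.posSemidef)
  rw [star_eq_conjTranspose] at hB
  have hdet : IsUnit B.det := by
    have h := (Matrix.isUnit_iff_isUnit_det _).mp hH.isUnit
    rw [hB, det_mul] at h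
    exact isUnit_of_mul_isUnit_right h
  refine ⟨B⁻¹, ?_⟩
  rw [hB, Matrix.mul_assoc, Matrix.mul_assoc, mul_nonsing_inv B hdet, Matrix.mul_one,
    ← conjTranspose_mul, mul_nonsing_inv B hdet, conjTranspose_one]

/-- A symmetrizer `H` with `M⁻¹ ≤ H ≤ M` yields a diagonalization whose transformation matrix and
inverse are bounded by `√M`. -/
theorem exists_diagonalization_of_symmetrizer [DecidableEq ι] {P H : Matrix ι ι ℂ} {M : ℝ}
    (hM : 0 < M) (hH : H.IsHermitian) (hHP : H * P = Pᴴ * H)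
    (hlow : loewnerLE (((M⁻¹ : ℝ) : ℂ) • 1) H) (hup : loewnerLE H (((M : ℝ) : ℂ) • 1)) :
    ∃ T Tinv : Matrix ι ι ℂ, T * Tinv = 1 ∧ Tinv * T = 1 ∧ matOpNorm T ≤ √M ∧
      matOpNorm Tinv ≤ √M ∧ ∃ Λ : ι → ℝ, Tinv * P * T = diagonal fun r => (Λ r : ℂ) := by
  rw [smul_one_loewnerLE_iff hH] at hlow
  rw [loewnerLE_smul_one_iff hH] at hup
  have hpos : H.PosDef := by
    refine PosDef.of_dotProduct_mulVec_pos hH fun x hx => ?_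
    rw [hH.star_dotProduct_mulVec_eq_re x]
    have h0 : 0 < ‖WithLp.toLp 2 x‖ := by
      rw [norm_pos_iff]
      exact fun h => hx (by simpa using h)
    exact_mod_cast (mul_pos (inv_pos.mpr hM) (pow_pos h0 2)).trans_le (hlow x)
  obtain ⟨T₁, hT₁⟩ := exists_conjTranspose_mul_mul_eq_one hpos
  have hK : (T₁ᴴ * (H * P) * T₁).IsHermitian := by
    refine isHermitian_conjTranspose_mul_mul _ ?_
    rw [Matrix.IsHermitian, conjTranspose_mul, hH.eq, hHP]
  set V : Matrix ι ι ℂ := (hK.eigenvectorUnitary : Matrix ι ι ℂ) with hV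
  have hVV : Vᴴ * V = 1 := Unitary.coe_star_mul_self hK.eigenvectorUnitary
  have hdiag : Vᴴ * (T₁ᴴ * (H * P) * T₁) * V = diagonal fun r => (hK.eigenvalues r : ℂ) := by
    have h := hK.conjStarAlgAut_star_eigenvectorUnitary
    rw [Unitary.conjStarAlgAut_star_apply] at h
    exact h
  have hone : (T₁ * V)ᴴ * H * (T₁ * V) = 1 := by
    rw [conjTranspose_mul]
    calc Vᴴ * T₁ᴴ * H * (T₁ * V) = Vᴴ * (T₁ᴴ * H * T₁) * V := by simp only [Matrix.mul_assoc]
      _ = 1 := by rw [hT₁, Matrix.mul_one, hVV]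
  have hinv : (T₁ * V) * ((T₁ * V)ᴴ * H) = 1 := mul_eq_one_comm.mp hone
  have hT (x : ι → ℂ) : (star ((T₁ * V) *ᵥ x) ⬝ᵥ (H *ᵥ ((T₁ * V) *ᵥ x))).re
      = ‖WithLp.toLp 2 x‖ ^ 2 := by
    rw [← star_dotProduct_conj_mulVec, hone, one_mulVec, star_dotProduct_self_eq_norm_sq,
      Complex.ofReal_re]
  refine ⟨T₁ * V, (T₁ * V)ᴴ * H, hinv, hone, norm_le_sqrt_of_norm_mulVec_sq_le fun x => ?_,
    norm_le_sqrt_of_norm_mulVec_sq_le fun x => ?_, hK.eigenvalues, ?_⟩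
  · have h := hlow ((T₁ * V) *ᵥ x)
    rwa [hT, inv_mul_le_iff₀ hM] at h
  · rw [← hT, mulVec_mulVec, hinv, one_mulVec]
    exact hup x
  · rw [← hdiag, conjTranspose_mul]
    simp only [Matrix.mul_assoc]

/-- Pulling back a symmetrizer along intertwining operators that are jointly boundedly left
invertible. -/
theorem exists_symmetrizer_of_intertwining [DecidableEq ι] [DecidableEq κ] {α β : Type*}
    [Fintype α] [DecidableEq α] [Fintype β] [DecidableEq β]
    {P : Matrix ι ι ℂ} {Q H : Matrix κ κ ℂ} {M K : ℝ} (hM : 0 < M)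
    (hH : H.IsHermitian) (hHQ : H * Q = Qᴴ * H) (hlow : loewnerLE (((M⁻¹ : ℝ) : ℂ) • 1) H)
    (hup : loewnerLE H (((M : ℝ) : ℂ) • 1))
    {G : Matrix κ ι ℂ} {F : Matrix α ι ℂ} {E : Matrix β ι ℂ} {J : Matrix α α ℂ}
    (hG : G * P = Q * G) (hF : F * P = J * F) (hJ : J.IsHermitian) (hE : E * P = 0)
    {G' : Matrix ι κ ℂ} {F' : Matrix ι α ℂ} {E' : Matrix ι β ℂ}
    (hinv : G' * G + F' * F + E' * E = 1)
    (bG : ‖G‖ ≤ K) (bF : ‖F‖ ≤ K) (bE : ‖E‖ ≤ K)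
    (bG' : ‖G'‖ ≤ K) (bF' : ‖F'‖ ≤ K) (bE' : ‖E'‖ ≤ K) :
    ∃ H₂ : Matrix ι ι ℂ, H₂.IsHermitian ∧ H₂ * P = Pᴴ * H₂ ∧
      loewnerLE ((((3 * K ^ 2 * (M + 1) + 1)⁻¹ : ℝ) : ℂ) • 1) H₂ ∧
      loewnerLE H₂ (((3 * K ^ 2 * (M + 1) + 1 : ℝ) : ℂ) • 1) := by
  rw [smul_one_loewnerLE_iff hH] at hlow
  rw [loewnerLE_smul_one_iff hH] at hup
  have hK : 0 ≤ K := (norm_nonneg _).trans bG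
  have hherm : (Gᴴ * H * G + Fᴴ * (1 : Matrix α α ℂ) * F +
      Eᴴ * (1 : Matrix β β ℂ) * E).IsHermitian :=
    ((isHermitian_conjTranspose_mul_mul G hH).add
      (isHermitian_conjTranspose_mul_mul F isHermitian_one)).add
      (isHermitian_conjTranspose_mul_mul E isHermitian_one)
  have hquad (x : ι → ℂ) : (star x ⬝ᵥ ((Gᴴ * H * G + Fᴴ * (1 : Matrix α α ℂ) * F +
      Eᴴ * (1 : Matrix β β ℂ) * E) *ᵥ x)).re =
      (star (G *ᵥ x) ⬝ᵥ (H *ᵥ (G *ᵥ x))).re + ‖WithLp.toLp 2 (F *ᵥ x)‖ ^ 2 +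
        ‖WithLp.toLp 2 (E *ᵥ x)‖ ^ 2 := by
    simp only [add_mulVec, dotProduct_add, star_dotProduct_conj_mulVec, one_mulVec,
      star_dotProduct_self_eq_norm_sq, Complex.add_re, Complex.ofReal_re]
  refine ⟨Gᴴ * H * G + Fᴴ * (1 : Matrix α α ℂ) * F + Eᴴ * (1 : Matrix β β ℂ) * E, hherm,
    ?_, ?_, ?_⟩
  · have h1 : Gᴴ * H * G * P = Pᴴ * (Gᴴ * H * G) := by
      calc Gᴴ * H * G * P = Gᴴ * (H * Q) * G := by simp only [Matrix.mul_assoc, hG]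
        _ = (Q * G)ᴴ * H * G := by rw [hHQ, conjTranspose_mul]; simp only [Matrix.mul_assoc]
        _ = Pᴴ * (Gᴴ * H * G) := by rw [← hG, conjTranspose_mul]; simp only [Matrix.mul_assoc]
    have h2 : Fᴴ * F * P = Pᴴ * (Fᴴ * F) := by
      calc Fᴴ * F * P = (J * F)ᴴ * F := by
            rw [conjTranspose_mul, hJ.eq, Matrix.mul_assoc, hF, Matrix.mul_assoc]
        _ = Pᴴ * (Fᴴ * F) := by rw [← hF, conjTranspose_mul, Matrix.mul_assoc]
    have h3 : Eᴴ * E * P = Pᴴ * (Eᴴ * E) := by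
      have h := congrArg conjTranspose hE
      rw [conjTranspose_mul, conjTranspose_zero] at h
      rw [Matrix.mul_assoc, hE, ← Matrix.mul_assoc, h, Matrix.mul_zero, Matrix.zero_mul]
    simp only [Matrix.mul_one, Matrix.add_mul, Matrix.mul_add, h1, h2, h3]
  · rw [smul_one_loewnerLE_iff hherm]
    intro x
    rw [hquad, inv_mul_le_iff₀ (by positivity)]
    have hx : x = G' *ᵥ (G *ᵥ x) + F' *ᵥ (F *ᵥ x) + E' *ᵥ (E *ᵥ x) := by
      simp only [mulVec_mulVec, ← add_mulVec, hinv, one_mulVec]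
    have hn : ‖WithLp.toLp 2 x‖ ≤ K * (‖WithLp.toLp 2 (G *ᵥ x)‖ + ‖WithLp.toLp 2 (F *ᵥ x)‖ +
        ‖WithLp.toLp 2 (E *ᵥ x)‖) := by
      calc ‖WithLp.toLp 2 x‖ = ‖WithLp.toLp 2 (G' *ᵥ (G *ᵥ x)) + WithLp.toLp 2 (F' *ᵥ (F *ᵥ x)) +
            WithLp.toLp 2 (E' *ᵥ (E *ᵥ x))‖ := by
            rw [← WithLp.toLp_add, ← WithLp.toLp_add, ← hx]
        _ ≤ _ := norm_add₃_le
        _ ≤ _ := by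
            rw [mul_add, mul_add]
            exact add_le_add (add_le_add (norm_mulVec_le_of_norm_le bG' _)
              (norm_mulVec_le_of_norm_le bF' _)) (norm_mulVec_le_of_norm_le bE' _)
    have hl := hlow (G *ᵥ x)
    rw [inv_mul_le_iff₀ hM] at hl
    set g := ‖WithLp.toLp 2 (G *ᵥ x)‖
    set f := ‖WithLp.toLp 2 (F *ᵥ x)‖
    set e := ‖WithLp.toLp 2 (E *ᵥ x)‖
    set q := (star (G *ᵥ x) ⬝ᵥ (H *ᵥ (G *ᵥ x))).re
    have hq : 0 ≤ q := by
      have := sq_nonneg g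
      exact nonneg_of_mul_nonneg_right (this.trans hl) hM
    calc ‖WithLp.toLp 2 x‖ ^ 2 ≤ (K * (g + f + e)) ^ 2 := by gcongr
      _ = K ^ 2 * (g + f + e) ^ 2 := by ring
      _ ≤ K ^ 2 * (3 * ((M + 1) * (q + f ^ 2 + e ^ 2))) := by
          gcongr
          have h1 : (g + f + e) ^ 2 ≤ 3 * (g ^ 2 + f ^ 2 + e ^ 2) := by
            nlinarith [sq_nonneg (g - f), sq_nonneg (g - e), sq_nonneg (f - e)]
          have h2 : 0 ≤ M * (f ^ 2 + e ^ 2) := by positivity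
          nlinarith
      _ ≤ (3 * K ^ 2 * (M + 1) + 1) * (q + f ^ 2 + e ^ 2) := by
          have : 0 ≤ q + f ^ 2 + e ^ 2 := by positivity
          nlinarith
  · rw [loewnerLE_smul_one_iff hherm]
    intro x
    rw [hquad]
    have hg := norm_mulVec_le_of_norm_le bG x
    have hf := norm_mulVec_le_of_norm_le bF x
    have he := norm_mulVec_le_of_norm_le bE x
    calc _ ≤ M * ‖WithLp.toLp 2 (G *ᵥ x)‖ ^ 2 + ‖WithLp.toLp 2 (F *ᵥ x)‖ ^ 2 +
          ‖WithLp.toLp 2 (E *ᵥ x)‖ ^ 2 := by gcongr; exact hup _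
      _ ≤ M * (K * ‖WithLp.toLp 2 x‖) ^ 2 + (K * ‖WithLp.toLp 2 x‖) ^ 2 +
          (K * ‖WithLp.toLp 2 x‖) ^ 2 := by gcongr
      _ ≤ _ := by
          have h1 : 0 ≤ K ^ 2 * ‖WithLp.toLp 2 x‖ ^ 2 := by positivity
          have h2 : 0 ≤ M * (K ^ 2 * ‖WithLp.toLp 2 x‖ ^ 2) := by positivity
          nlinarith [sq_nonneg ‖WithLp.toLp 2 x‖]

end NormBounds

section Reduction

open scoped Matrix.Norms.L2Operator

theorem l2_opNorm_one_le {β : Type*} [Fintype β] [DecidableEq β] :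
    ‖(1 : Matrix β β ℂ)‖ ≤ 1 := by
  rw [l2_opNorm_def]
  refine ContinuousLinearMap.opNorm_le_bound _ zero_le_one fun x => ?_
  have h : toEuclideanLin (1 : Matrix β β ℂ) x = x := by simp
  exact ((congrArg norm h).trans (one_mul _).symm).le

theorem exists_inverse_sq_sub_sq {β : Type*} [Fintype β] [DecidableEq β] {P : Matrix β β ℂ}
    {p : ℝ} (hP : ‖P‖ ≤ p) :
    ∃ W : Matrix β β ℂ,
      W * (P * P - ((p + 1 : ℝ) : ℂ) • ((p + 1 : ℝ) : ℂ) • 1) = 1 ∧ P * W = W * P ∧ ‖W‖ ≤ 1 := by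
  have hp : 0 ≤ p := (norm_nonneg _).trans hP
  set l : ℂ := ((p + 1 : ℝ) : ℂ)
  have hl : ‖l * l‖ = (p + 1) * (p + 1) := by
    rw [norm_mul, Complex.norm_real, Real.norm_of_nonneg (by positivity)]
  have hPP : ‖P * P‖ ≤ p * p := norm_mul_le_of_norm_le hP hP
  have hmem : l * l ∈ resolventSet ℂ (P * P) := by
    refine spectrum.mem_resolventSet_of_norm_lt_mul ?_
    rw [hl]
    calc ‖P * P‖ * ‖(1 : Matrix β β ℂ)‖ ≤ p * p * 1 := by gcongr; exact l2_opNorm_one_le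
      _ < _ := by nlinarith
  have hunit : IsUnit (P * P - l • l • (1 : Matrix β β ℂ)) := by
    rw [spectrum.mem_resolventSet_iff, Algebra.algebraMap_eq_smul_one, mul_smul] at hmem
    rw [← neg_sub]
    exact hmem.neg
  obtain ⟨u, hu⟩ := hunit
  have hWu : (↑u⁻¹ : Matrix β β ℂ) * (P * P - l • l • 1) = 1 := by rw [← hu, Units.inv_mul]
  refine ⟨↑u⁻¹, hWu, ?_, ?_⟩
  · have hc : Commute P (u : Matrix β β ℂ) := by
      rw [hu, Commute, SemiconjBy]
      simp [mul_sub, sub_mul, mul_assoc]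
    exact hc.units_inv_right
  · set W : Matrix β β ℂ := ↑u⁻¹
    have h1 : (l * l) • W = W * (P * P) - 1 := by
      rw [← hWu, mul_sub, mul_smul]
      simp
    have h2 := congrArg norm h1
    rw [norm_smul, hl] at h2
    have h3 : ‖W * (P * P) - 1‖ ≤ ‖W‖ * (p * p) + 1 :=
      (norm_sub_le _ _).trans
        (add_le_add (norm_mul_le_of_norm_le le_rfl hPP) l2_opNorm_one_le)
    nlinarith [norm_nonneg W]

/-- Symmetrizer for a reduced symbol `P`. The projections `πa` and `πb` select the auxiliary and
the original variables, `S` contracts the auxiliary variables with the direction, `J` is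
the transverse symbol, and `E`, `R` are complementary projections. -/
theorem exists_symmetrizer_of_reduction {ι α β : Type*} [Fintype ι] [DecidableEq ι]
    [Fintype α] [DecidableEq α] [Fintype β] [DecidableEq β]
    {πa : Matrix α ι ℂ} {πb : Matrix β ι ℂ} {P : Matrix ι ι ℂ} {Q E R : Matrix β β ℂ}
    {S Z : Matrix β α ℂ} {J : Matrix α α ℂ} {p C : ℝ}
    (hπ : πaᴴ * πa + πbᴴ * πb = 1)
    (hPa : πa * P = (Sᴴ * Z + ((p + 1 : ℝ) : ℂ) • J) * πa + Sᴴ * Q * R * πb)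
    (hPb : πb * P = R * Z * πa + R * Q * R * πb)
    (hSS : S * Sᴴ = E) (hSJ : Sᴴ * S + J * J = 1) (hSJ0 : S * J = 0) (hJ : J.IsHermitian)
    (hRE : R + E = 1) (hE : E * E = E) (hEH : E.IsHermitian) (hES : E * S = S)
    (hZS : Z * Sᴴ = Q * E)
    (hC : 1 ≤ C) (hpC : p + 1 ≤ C) (bπa : ‖πa‖ ≤ C) (bπb : ‖πb‖ ≤ C) (bQ : ‖Q‖ ≤ p)
    (bE : ‖E‖ ≤ C) (bR : ‖R‖ ≤ C) (bS : ‖S‖ ≤ C) (bZ : ‖Z‖ ≤ C) (bJ : ‖J‖ ≤ C)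
    {H : Matrix β β ℂ} {M : ℝ} (hM : 0 < M) (hH : H.IsHermitian) (hHQ : H * Q = Qᴴ * H)
    (hlow : loewnerLE (((M⁻¹ : ℝ) : ℂ) • 1) H) (hup : loewnerLE H (((M : ℝ) : ℂ) • 1)) :
    ∃ H₂ : Matrix ι ι ℂ, H₂.IsHermitian ∧ H₂ * P = Pᴴ * H₂ ∧
      loewnerLE ((((3 * (2 * C ^ 2 * (1 + C ^ 3 + C ^ 4)) ^ 2 * (M + 1) + 1)⁻¹ : ℝ) : ℂ) • 1) H₂ ∧
      loewnerLE H₂ (((3 * (2 * C ^ 2 * (1 + C ^ 3 + C ^ 4)) ^ 2 * (M + 1) + 1 : ℝ) : ℂ) • 1) := by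
  obtain ⟨W, hW, hQW, bW⟩ := exists_inverse_sq_sub_sq bQ
  have hp : 0 ≤ p := (norm_nonneg _).trans bQ
  have bl : ‖((p + 1 : ℝ) : ℂ)‖ ≤ C := by
    rwa [Complex.norm_real, Real.norm_of_nonneg (by positivity)]
  have hlH : (((p + 1 : ℝ) : ℂ) • J).IsHermitian := by
    simp [Matrix.IsHermitian, conjTranspose_smul, hJ.eq]
  set l : ℂ := ((p + 1 : ℝ) : ℂ)
  have hJS : J * Sᴴ = 0 := by
    have h := congrArg conjTranspose hSJ0
    rwa [conjTranspose_mul, conjTranspose_zero, hJ.eq] at h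
  have hJJJ : J * (J * J) = J := by
    have h : J * (Sᴴ * S + J * J) = J := by rw [hSJ, Matrix.mul_one]
    rwa [Matrix.mul_add, ← Matrix.mul_assoc, hJS, Matrix.zero_mul, zero_add] at h
  have hER : E * R = 0 := by
    rw [← eq_sub_iff_add_eq] at hRE
    rw [hRE, mul_sub, mul_one, hE, sub_self]
  have hRR : R * R = R := by
    have h : (R + E) * R = R := by rw [hRE, one_mul]
    rwa [add_mul, hER, add_zero] at h
  have hRH : R.IsHermitian := by
    rw [← eq_sub_iff_add_eq] at hRE
    rw [hRE]
    exact isHermitian_one.sub hEH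
  have hQS : Q * S = Z - Z * (J * J) := by
    rw [← hES, ← Matrix.mul_assoc, ← hZS, Matrix.mul_assoc, eq_sub_of_add_eq hSJ, Matrix.mul_sub,
      Matrix.mul_one]
  have hRS : Rᴴ * S = 0 := by
    rw [hRH.eq, eq_sub_of_add_eq hRE, Matrix.sub_mul, hES, Matrix.one_mul, sub_self]
  obtain ⟨Y, hY⟩ : ∃ Y, Y = W * (Q * (Z * J) + l • (Z * (J * J))) := ⟨_, rfl⟩
  have hsylv : Q * Y = Z * J + l • (Y * J) := by
    have h : W * (Q * Q - l • l • 1) * (Z * J) = Z * J := by rw [hW, Matrix.one_mul]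
    have h1 : Q * Y = W * (Q * (Q * (Z * J)) + l • (Q * (Z * (J * J)))) := by
      rw [hY, ← Matrix.mul_assoc, hQW, Matrix.mul_assoc, Matrix.mul_add, Matrix.mul_smul]
    have h2 : Y * J = W * (Q * (Z * (J * J)) + l • (Z * J)) := by
      rw [hY, Matrix.mul_assoc, Matrix.add_mul, Matrix.smul_mul]
      simp only [Matrix.mul_assoc, hJJJ]
    rw [h1, h2]
    refine Eq.trans ?_ (congrArg (· + l • (W * (Q * (Z * (J * J)) + l • (Z * J)))) h)
    simp only [Matrix.mul_add, Matrix.mul_sub, Matrix.sub_mul, Matrix.mul_smul, Matrix.smul_mul,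
      Matrix.mul_assoc, Matrix.one_mul, smul_add]
    abel
  have bY : ‖Y‖ ≤ C ^ 3 + C ^ 4 := by
    have h := norm_mul_le_of_norm_le bW ((norm_add_le (Q * (Z * J)) (l • (Z * (J * J)))).trans
      (add_le_add (norm_mul_le_of_norm_le (bQ.trans ((by linarith : p ≤ p + 1).trans hpC))
        (norm_mul_le_of_norm_le bZ bJ))
        ((norm_smul_le _ _).trans (mul_le_mul bl (norm_mul_le_of_norm_le bZ
          (norm_mul_le_of_norm_le bJ bJ)) (norm_nonneg _) (by linarith)))))
    rw [← hY] at h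
    exact h.trans (by ring_nf; rfl)
  set y : ℝ := C ^ 3 + C ^ 4 with hy
  have hy0 : 0 ≤ y := by positivity
  clear_value y
  have hCy : 0 ≤ C ^ 2 * y := by positivity
  have hC2 : 0 ≤ C ^ 2 := by positivity
  have hK : 2 * C ^ 2 * (1 + C ^ 3 + C ^ 4) = 2 * C ^ 2 * (1 + y) := by rw [hy]; ring
  rw [hK]
  have bπa' : ‖πaᴴ‖ ≤ C := by rwa [l2_opNorm_conjTranspose]
  have bπb' : ‖πbᴴ‖ ≤ C := by rwa [l2_opNorm_conjTranspose]
  have bS' : ‖Sᴴ‖ ≤ C := by rwa [l2_opNorm_conjTranspose]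
  have bL : ‖πaᴴ * Sᴴ + πbᴴ * R‖ ≤ 2 * C ^ 2 :=
    ((norm_add_le _ _).trans (add_le_add (norm_mul_le_of_norm_le bπa' bS')
      (norm_mul_le_of_norm_le bπb' bR))).trans (by ring_nf; rfl)
  refine exists_symmetrizer_of_intertwining (K := 2 * C ^ 2 * (1 + y)) hM hH hHQ hlow hup
    (G := (S + Y * J) * πa + R * πb) (F := J * πa) (E := E * πb) (J := l • J)
    (G' := πaᴴ * Sᴴ + πbᴴ * R) (F' := πaᴴ * J - (πaᴴ * Sᴴ + πbᴴ * R) * Y) (E' := πbᴴ * E)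
    ?_ ?_ hlH ?_ ?_ ?_ ?_ ?_ ?_ ?_ ?_
  · have h1 : ((S + Y * J) * πa + R * πb) * P =
        (Z + l • (Y * (J * J))) * πa + Q * R * πb := by
      have hZ : Z = R * Z + E * Z := by rw [← Matrix.add_mul, hRE, Matrix.one_mul]
      have hQR : Q * R * πb = R * (Q * R * πb) + E * (Q * R * πb) := by
        rw [← Matrix.add_mul, hRE, Matrix.one_mul]
      rw [Matrix.add_mul, Matrix.mul_assoc, Matrix.mul_assoc R, hPa, hPb]
      conv_rhs => rw [hQR, hZ, ← hSS]
      have hJS' (X : Matrix β ι ℂ) : J * (Sᴴ * X) = 0 := by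
        rw [← Matrix.mul_assoc, hJS, Matrix.zero_mul]
      have hSJ' (X : Matrix α ι ℂ) : S * (J * X) = 0 := by
        rw [← Matrix.mul_assoc, hSJ0, Matrix.zero_mul]
      have hRR' (X : Matrix β ι ℂ) : R * (R * X) = R * X := by
        rw [← Matrix.mul_assoc, hRR]
      simp only [Matrix.mul_add, Matrix.add_mul, Matrix.mul_smul, Matrix.smul_mul,
        Matrix.mul_assoc, hJS', hSJ', hRR', Matrix.mul_zero,
        smul_add, smul_zero]
      abel
    rw [h1]
    have h2 : Q * (Y * J) = Z * (J * J) + l • (Y * (J * J)) := by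
      rw [← Matrix.mul_assoc, hsylv, Matrix.add_mul, Matrix.smul_mul, Matrix.mul_assoc,
        Matrix.mul_assoc]
    rw [Matrix.mul_add Q, ← Matrix.mul_assoc Q, ← Matrix.mul_assoc Q, Matrix.mul_add Q, hQS, h2]
    congr 2
    abel
  · rw [Matrix.mul_assoc, hPa]
    simp only [Matrix.mul_add, Matrix.add_mul, ← Matrix.mul_assoc, hJS, Matrix.zero_mul,
      Matrix.mul_smul, Matrix.smul_mul]
    abel
  · rw [Matrix.mul_assoc, hPb]
    simp only [Matrix.mul_add, ← Matrix.mul_assoc, hER, Matrix.zero_mul, add_zero]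
  · rw [← hπ]
    have hRS' : R * S = 0 := by rwa [hRH.eq] at hRS
    have hSR : Sᴴ * R = 0 := by
      have h := congrArg conjTranspose hRS
      rwa [conjTranspose_mul, conjTranspose_zero, conjTranspose_conjTranspose] at h
    have ha : πaᴴ * πa = πaᴴ * (Sᴴ * S + J * J) * πa := by rw [hSJ, Matrix.mul_one]
    have hb : πbᴴ * πb = πbᴴ * (R * R + E * E) * πb := by rw [hRR, hE, hRE, Matrix.mul_one]
    have hSR' (X : Matrix β ι ℂ) : Sᴴ * (R * X) = 0 := by
      rw [← Matrix.mul_assoc, hSR, Matrix.zero_mul]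
    have hRS'' (X : Matrix α ι ℂ) : R * (S * X) = 0 := by
      rw [← Matrix.mul_assoc, hRS', Matrix.zero_mul]
    rw [ha, hb]
    simp only [Matrix.mul_add, Matrix.add_mul, Matrix.sub_mul, Matrix.mul_assoc, hSR', hRS'',
      Matrix.mul_zero]
    abel
  · refine ((norm_add_le _ _).trans (add_le_add (norm_mul_le_of_norm_le ((norm_add_le _ _).trans
      (add_le_add bS (norm_mul_le_of_norm_le bY bJ))) bπa)
      (norm_mul_le_of_norm_le bR bπb))).trans ?_
    linarith
  · exact (norm_mul_le_of_norm_le bJ bπa).trans (by linarith)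
  · exact (norm_mul_le_of_norm_le bE bπb).trans (by linarith)
  · exact bL.trans (by linarith)
  · refine ((norm_sub_le _ _).trans (add_le_add (norm_mul_le_of_norm_le bπa' bJ)
      (norm_mul_le_of_norm_le bL bY))).trans ?_
    linarith
  · exact (norm_mul_le_of_norm_le bπb' bE).trans (by linarith)

end Reduction

section Concrete

/-- The position of the `m`-th component of `v⁰` in the FTNS state. -/
def zeroIdx {N : ℕ} (n : ℕ → ℕ) (hN : 0 < N) (m : Fin (n 0)) : IN N n := ⟨⟨0, hN⟩, m⟩

theorem zeroIdx_injective {N : ℕ} (n : ℕ → ℕ) (hN : 0 < N) :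
    Function.Injective (zeroIdx n hN) :=
  fun _ _ h => by simpa [zeroIdx] using h

/-- The contraction of `dᵢ` with the direction `s`, placed in the `v⁰` components. -/
noncomputable def contraction {N : ℕ} (n : ℕ → ℕ) (hN : 0 < N) (s : Fin 3 → ℝ) :
    Matrix (IN N n) (Fin 3 × Fin (n 0)) ℂ :=
  Matrix.of fun r c => if r = zeroIdx n hN c.2 then (s c.1 : ℂ) else 0

/-- The projection onto the `v⁰` components. -/
def zeroProj (N : ℕ) (n : ℕ → ℕ) : Matrix (IN N n) (IN N n) ℂ :=
  diagonal fun r => if (r.1 : ℕ) = 0 then 1 else 0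

/-- The symbol `i εᵢₖⱼ sₖ` of the curl, acting on the auxiliary variables `dⱼ`. -/
noncomputable def curlSymbol (m : ℕ) (s : Fin 3 → ℝ) : Matrix (Fin 3 × Fin m) (Fin 3 × Fin m) ℂ :=
  Matrix.of fun r c =>
    if r.2 = c.2 then Complex.I * ∑ k, (s k : ℂ) * (lev r.1 k c.1 : ℂ) else 0

/-- The symbol of the `A^μ₀` terms with one derivative replaced by the auxiliary variable. -/
noncomputable def auxSymbol (N : ℕ) (n : ℕ → ℕ)
    (A : (μ ν : ℕ) → (Fin (μ - ν + 1) → Fin 3) → Matrix (Fin (n μ)) (Fin (n ν)) ℂ)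
    (s : Fin 3 → ℝ) : Matrix (IN N n) (Fin 3 × Fin (n 0)) ℂ :=
  Matrix.of fun r c =>
    ∑ K : Fin (r.1 : ℕ) → Fin 3, (∏ t, (s (K t) : ℂ)) *
      A r.1 0 (fun t : Fin ((r.1 : ℕ) - 0 + 1) =>
        if h : (t : ℕ) < (r.1 : ℕ) then K ⟨t, h⟩ else c.1) r.2 c.2

variable {N : ℕ} {n : ℕ → ℕ} (hN : 0 < N) (s : Fin 3 → ℝ)

theorem eq_zero_iff_exists_zeroIdx (r : IN N n) :
    (r.1 : ℕ) = 0 ↔ ∃ m, r = zeroIdx n hN m := by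
  constructor
  · obtain ⟨⟨μ, hμ⟩, q⟩ := r
    rintro h
    obtain rfl : μ = 0 := h
    exact ⟨q, rfl⟩
  · rintro ⟨m, rfl⟩
    rfl

theorem conjTranspose_contraction_mul {τ : Type*} (Q : Matrix (IN N n) τ ℂ)
    (c : Fin 3 × Fin (n 0)) (t : τ) :
    ((contraction n hN s)ᴴ * Q) c t = (s c.1 : ℂ) * Q (zeroIdx n hN c.2) t := by
  simp [mul_apply, contraction, conjTranspose_apply, apply_ite]

theorem contraction_zeroIdx (m : Fin (n 0)) (c : Fin 3 × Fin (n 0)) :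
    contraction n hN s (zeroIdx n hN m) c = if m = c.2 then (s c.1 : ℂ) else 0 := by
  simp [contraction, (zeroIdx_injective n hN).eq_iff]

theorem mul_conjTranspose_contraction_zeroIdx {τ : Type*} (Z : Matrix τ (Fin 3 × Fin (n 0)) ℂ)
    (t : τ) (m : Fin (n 0)) :
    (Z * (contraction n hN s)ᴴ) t (zeroIdx n hN m) = ∑ j, Z t (j, m) * (s j : ℂ) := by
  simp [mul_apply, conjTranspose_apply, contraction_zeroIdx, Fintype.sum_prod_type, apply_ite]

theorem mul_conjTranspose_contraction_of_ne {τ : Type*} (Z : Matrix τ (Fin 3 × Fin (n 0)) ℂ)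
    (t : τ) {r : IN N n} (hr : (r.1 : ℕ) ≠ 0) :
    (Z * (contraction n hN s)ᴴ) t r = 0 := by
  rw [mul_apply]
  refine Finset.sum_eq_zero fun c _ => ?_
  have : r ≠ zeroIdx n hN c.2 := fun h => hr ((eq_zero_iff_exists_zeroIdx hN r).mpr ⟨_, h⟩)
  simp [conjTranspose_apply, contraction, this]

theorem contraction_mul_conjTranspose (hs : ∑ i, s i ^ 2 = 1) :
    contraction n hN s * (contraction n hN s)ᴴ = zeroProj N n := by
  have hs' : (∑ i, (s i : ℂ) * (s i : ℂ)) = 1 := by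
    rw [← Complex.ofReal_one, ← hs]
    push_cast
    exact Finset.sum_congr rfl fun i _ => (sq _).symm
  ext r r'
  by_cases h' : (r'.1 : ℕ) = 0
  · obtain ⟨m', rfl⟩ := (eq_zero_iff_exists_zeroIdx hN r').mp h'
    rw [mul_conjTranspose_contraction_zeroIdx]
    by_cases h : r = zeroIdx n hN m'
    · subst h
      simp [contraction, zeroProj, h', hs']
    · simp [contraction, zeroProj, h]
  · rw [mul_conjTranspose_contraction_of_ne hN s _ _ h']
    by_cases h : r = r'
    · subst h
      simp [zeroProj, h']
    · simp [zeroProj, h]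

theorem curlSymbol_mul_self_add (hs : ∑ i, s i ^ 2 = 1) :
    (contraction n hN s)ᴴ * contraction n hN s + curlSymbol (n 0) s * curlSymbol (n 0) s = 1 := by
  have hs' : (s 0 : ℂ) ^ 2 + (s 1 : ℂ) ^ 2 + (s 2 : ℂ) ^ 2 = 1 := by
    rw [Fin.sum_univ_three] at hs
    exact_mod_cast hs
  ext ⟨i, m⟩ ⟨j, m'⟩
  rw [Matrix.add_apply, conjTranspose_contraction_mul, contraction_zeroIdx, mul_apply,
    Fintype.sum_prod_type, one_apply]
  by_cases h : m = m'
  · subst h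
    fin_cases i <;> fin_cases j <;>
      simp [curlSymbol, Fin.sum_univ_three, lev] <;>
      ring_nf <;> simp only [Complex.I_sq] <;> first | linear_combination hs' | ring
  · simp [curlSymbol, h]

theorem contraction_mul_curlSymbol :
    contraction n hN s * curlSymbol (n 0) s = 0 := by
  ext r ⟨j, m⟩
  rw [mul_apply, Fintype.sum_prod_type]
  by_cases h : r = zeroIdx n hN m
  · subst h
    fin_cases j <;>
      simp [contraction, curlSymbol, Fin.sum_univ_three, lev, (zeroIdx_injective n hN).eq_iff] <;>
      ring
  · refine Finset.sum_eq_zero fun i _ => Finset.sum_eq_zero fun m' _ => ?_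
    by_cases hm : m' = m
    · subst hm
      simp [contraction, h]
    · simp [curlSymbol, hm]

theorem curlSymbol_isHermitian (m : ℕ) : (curlSymbol m s).IsHermitian := by
  ext ⟨i, a⟩ ⟨j, b⟩
  by_cases h : a = b
  · subst h
    fin_cases i <;> fin_cases j <;>
      simp [curlSymbol, conjTranspose_apply, Fin.sum_univ_three, lev]
  · simp [curlSymbol, conjTranspose_apply, h, Ne.symm h]

theorem zeroProj_mul_self : zeroProj N n * zeroProj N n = zeroProj N n := by
  simp [zeroProj]

theorem zeroProj_isHermitian : (zeroProj N n).IsHermitian :=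
  isHermitian_diagonal_of_self_adjoint _ (by ext r; simp [apply_ite])

theorem zeroProj_mul_contraction :
    zeroProj N n * contraction n hN s = contraction n hN s := by
  ext r c
  rw [zeroProj, diagonal_mul]
  by_cases h : r = zeroIdx n hN c.2
  · subst h
    simp [zeroIdx]
  · simp [contraction, h]

variable (A : (μ ν : ℕ) → (Fin (μ - ν + 1) → Fin 3) → Matrix (Fin (n μ)) (Fin (n ν)) ℂ)
  (A' : (μ : ℕ) → Matrix (Fin (n μ)) (Fin (n (μ + 1))) ℂ)
  (B10 : (μ : ℕ) → (Fin μ → Fin 3) → Matrix (Fin (n μ)) (Fin (n 0)) ℂ)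

theorem auxSymbol_mul_conjTranspose :
    auxSymbol N n A s * (contraction n hN s)ᴴ = PN N n A A' s * zeroProj N n := by
  ext r r'
  rw [zeroProj, mul_diagonal]
  by_cases h' : (r'.1 : ℕ) = 0
  · obtain ⟨m, rfl⟩ := (eq_zero_iff_exists_zeroIdx hN r').mp h'
    rw [mul_conjTranspose_contraction_zeroIdx]
    simp only [auxSymbol, PN, of_apply, zeroIdx, Nat.zero_le, dite_true, if_true, mul_one]
    obtain ⟨⟨μ, hμ⟩, q⟩ := r
    simp only
    change _ = ∑ k : Fin (μ + 1) → Fin 3, (∏ t, (s (k t) : ℂ)) * A μ 0 k q m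
    rw [← (Fin.snocEquiv fun _ : Fin (μ + 1) => Fin 3).sum_comp, Fintype.sum_prod_type]
    refine Finset.sum_congr rfl fun j _ => ?_
    rw [Finset.sum_mul]
    refine Finset.sum_congr rfl fun K _ => ?_
    have hK : (fun t : Fin (μ + 1) => if h : (t : ℕ) < μ then K ⟨t, h⟩ else j) =
        Fin.snocEquiv (fun _ : Fin (μ + 1) => Fin 3) (j, K) := by
      ext t
      simp [Fin.snocEquiv, Fin.snoc, Fin.castLT]
    rw [← hK, Fin.prod_univ_castSucc]
    simp
    ring
  · rw [mul_conjTranspose_contraction_of_ne hN s _ _ h']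
    simp [h']

theorem PN_apply_of_eq_succ (r c : IN N n) (h : (c.1 : ℕ) = (r.1 : ℕ) + 1) :
    PN N n A A' s r c = A' r.1 r.2 (Fin.cast (congrArg n h) c.2) := by
  rw [PN, of_apply, dif_neg (by omega), dif_pos h]

theorem PNm1_eq_fromBlocks (l : ℂ) :
    PNm1 N n A A' B10 (fun k => -(A 0 0 (fun _ => k))) (fun _ _ => 0)
      (fun i k => if i = k then -(B10 0 Fin.elim0) else 0)
      (fun i k j => (Complex.I * l * (lev i k j : ℂ)) • (1 : Matrix (Fin (n 0)) (Fin (n 0)) ℂ))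
      (fun μ K' => -(B10 μ K')) (fun _ _ _ _ => 0) s =
    fromBlocks ((contraction n hN s)ᴴ * auxSymbol N n A s + l • curlSymbol (n 0) s)
      ((contraction n hN s)ᴴ * PN N n A A' s * (1 - zeroProj N n))
      ((1 - zeroProj N n) * auxSymbol N n A s)
      ((1 - zeroProj N n) * PN N n A A' s * (1 - zeroProj N n)) := by
  have hR : (1 - zeroProj N n : Matrix (IN N n) (IN N n) ℂ) =
      diagonal fun r => if (r.1 : ℕ) = 0 then 0 else 1 := by
    rw [zeroProj, ← diagonal_one, diagonal_sub]
    congr 1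
    ext r
    split_ifs <;> simp
  rw [hR]
  ext (⟨i, m⟩ | ⟨μ, q⟩) (⟨j, m'⟩ | ⟨ν, q'⟩)
  · rw [fromBlocks_apply₁₁, Matrix.add_apply, conjTranspose_contraction_mul]
    by_cases h : m = m'
    · subst h
      simp [PNm1, auxSymbol, zeroIdx, curlSymbol, Finset.mul_sum]
      refine Finset.sum_congr rfl fun k _ => ?_
      ring
    · simp [PNm1, auxSymbol, zeroIdx, curlSymbol, h]
  · rw [fromBlocks_apply₁₂, mul_diagonal, conjTranspose_contraction_mul]
    obtain ⟨ν, hν⟩ := ν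
    simp only [PNm1, of_apply]
    split_ifs with h0 h1
    · rw [mul_zero]
      refine Finset.sum_eq_zero fun k _ => ?_
      split_ifs <;> simp
    · obtain rfl : ν = 1 := h1
      rw [mul_one]
      exact congrArg _ (PN_apply_of_eq_succ s A A' (zeroIdx n hN m) ⟨⟨1, hν⟩, q'⟩ rfl).symm
    · simp_all [PN, zeroIdx]
  · rw [fromBlocks_apply₂₁, diagonal_mul]
    simp only [PNm1, of_apply]
    split_ifs with h0
    · simp
    · simp [auxSymbol]
  · rw [fromBlocks_apply₂₂, mul_diagonal, diagonal_mul]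
    simp only [PNm1, of_apply]
    split_ifs <;> simp

end Concrete

section UniformBounds

open scoped Matrix.Norms.L2Operator

theorem isCompact_setOf_sum_sq_eq_one {ι : Type*} [Fintype ι] :
    IsCompact {s : ι → ℝ | ∑ i, s i ^ 2 = 1} := by
  refine Metric.isCompact_of_isClosed_isBounded
    (isClosed_eq (by fun_prop) continuous_const) ?_
  refine (Metric.isBounded_closedBall (x := (0 : ι → ℝ)) (r := 1)).subset fun s hs => ?_
  rw [mem_closedBall_zero_iff, pi_norm_le_iff_of_nonneg zero_le_one]
  intro i
  rw [Real.norm_eq_abs, ← sq_le_one_iff_abs_le_one, ← show ∑ i, s i ^ 2 = 1 from hs]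
  exact Finset.single_le_sum (f := fun i => s i ^ 2) (fun j _ => sq_nonneg _) (Finset.mem_univ i)

theorem exists_forall_norm_le_of_sum_sq_eq_one {ι E : Type*} [Fintype ι]
    [SeminormedAddCommGroup E] {f : (ι → ℝ) → E} (hf : Continuous f) :
    ∃ C, ∀ s : ι → ℝ, ∑ i, s i ^ 2 = 1 → ‖f s‖ ≤ C :=
  isCompact_setOf_sum_sq_eq_one.exists_bound_of_continuousOn hf.continuousOn

variable {N : ℕ} {n : ℕ → ℕ}
  (A : (μ ν : ℕ) → (Fin (μ - ν + 1) → Fin 3) → Matrix (Fin (n μ)) (Fin (n ν)) ℂ)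
  (A' : (μ : ℕ) → Matrix (Fin (n μ)) (Fin (n (μ + 1))) ℂ)

theorem continuous_PN : Continuous (PN N n A A') := by
  refine continuous_matrix fun r c => ?_
  simp only [PN, of_apply]
  split_ifs <;> fun_prop

theorem exists_forall_matOpNorm_PN_le :
    ∃ p, ∀ s : Fin 3 → ℝ, ∑ i, s i ^ 2 = 1 → matOpNorm (PN N n A A' s) ≤ p :=
  exists_forall_norm_le_of_sum_sq_eq_one (f := PN N n A A') (continuous_PN A A')

theorem continuous_auxSymbol : Continuous (auxSymbol N n A) := by
  refine continuous_matrix fun r c => ?_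
  simp only [auxSymbol, of_apply]
  fun_prop

theorem continuous_contraction (hN : 0 < N) : Continuous (contraction n hN) := by
  refine continuous_matrix fun r c => ?_
  simp only [contraction, of_apply]
  split_ifs <;> fun_prop

theorem continuous_curlSymbol (m : ℕ) : Continuous (curlSymbol m) := by
  refine continuous_matrix fun r c => ?_
  simp only [curlSymbol, of_apply]
  split_ifs <;> fun_prop

/-- The FT(N-1)S symbol with transverse parameter `p + 1`, where `p` bounds the FTNS symbol on the
unit sphere, has symmetrizers bounded uniformly in the direction. -/
theorem exists_uniform_symmetrizer_PNm1 (hN : 0 < N)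
    (B10 : (μ : ℕ) → (Fin μ → Fin 3) → Matrix (Fin (n μ)) (Fin (n 0)) ℂ) {M p : ℝ}
    (hM : 0 < M)
    (hbQ : ∀ s : Fin 3 → ℝ, ∑ i, s i ^ 2 = 1 → matOpNorm (PN N n A A' s) ≤ p) :
    ∃ M2 : ℝ, 0 < M2 ∧ ∀ (s : Fin 3 → ℝ) (H : Matrix (IN N n) (IN N n) ℂ),
      ∑ i, s i ^ 2 = 1 → H.IsHermitian → H * PN N n A A' s = (PN N n A A' s)ᴴ * H →
      loewnerLE (((M⁻¹ : ℝ) : ℂ) • 1) H → loewnerLE H (((M : ℝ) : ℂ) • 1) →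
      ∃ H2 : Matrix (INm1 N n) (INm1 N n) ℂ,
        H2.IsHermitian ∧
        H2 * PNm1 N n A A' B10
            (fun k => -(A 0 0 (fun _ => k))) (fun _ _ => 0)
            (fun i k => if i = k then -(B10 0 Fin.elim0) else 0)
            (fun i k j => (Complex.I * ((p + 1 : ℝ) : ℂ) * (lev i k j : ℂ)) •
              (1 : Matrix (Fin (n 0)) (Fin (n 0)) ℂ))
            (fun μ K' => -(B10 μ K')) (fun _ _ _ _ => 0) s
          = (PNm1 N n A A' B10
              (fun k => -(A 0 0 (fun _ => k))) (fun _ _ => 0)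
              (fun i k => if i = k then -(B10 0 Fin.elim0) else 0)
              (fun i k j => (Complex.I * ((p + 1 : ℝ) : ℂ) * (lev i k j : ℂ)) •
                (1 : Matrix (Fin (n 0)) (Fin (n 0)) ℂ))
              (fun μ K' => -(B10 μ K')) (fun _ _ _ _ => 0) s)ᴴ * H2 ∧
        loewnerLE (((M2⁻¹ : ℝ) : ℂ) • 1) H2 ∧
        loewnerLE H2 (((M2 : ℝ) : ℂ) • 1) := by
  obtain ⟨cZ, hcZ⟩ := exists_forall_norm_le_of_sum_sq_eq_one (continuous_auxSymbol A (N := N))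
  obtain ⟨cS, hcS⟩ := exists_forall_norm_le_of_sum_sq_eq_one (continuous_contraction (n := n) hN)
  obtain ⟨cJ, hcJ⟩ := exists_forall_norm_le_of_sum_sq_eq_one (continuous_curlSymbol (n 0))
  let πa : Matrix (Fin 3 × Fin (n 0)) (INm1 N n) ℂ := fromCols 1 0
  let πb : Matrix (IN N n) (INm1 N n) ℂ := fromCols 0 1
  obtain ⟨C, h⟩ := ({1, p + 1, cZ, cS, cJ, ‖πa‖, ‖πb‖,
    ‖zeroProj N n‖, ‖1 - zeroProj N n‖} : Finset ℝ).exists_le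
  simp only [Finset.mem_insert, Finset.mem_singleton, forall_eq_or_imp, forall_eq] at h
  obtain ⟨hC, hpC, hZ, hS, hJ, hπa, hπb, hE, hR⟩ := h
  refine ⟨3 * (2 * C ^ 2 * (1 + C ^ 3 + C ^ 4)) ^ 2 * (M + 1) + 1, by positivity, ?_⟩
  intro s H hs hH hHQ hlow hup
  rw [PNm1_eq_fromBlocks hN]
  refine exists_symmetrizer_of_reduction (πa := πa) (πb := πb) (Q := PN N n A A' s)
    (E := zeroProj N n) (R := 1 - zeroProj N n) (S := contraction n hN s)
    (Z := auxSymbol N n A s) (J := curlSymbol (n 0) s)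
    (p := p) (C := C) ?_ ?_ ?_ (contraction_mul_conjTranspose hN s hs)
    (curlSymbol_mul_self_add hN s hs) (contraction_mul_curlSymbol hN s)
    (curlSymbol_isHermitian s _) (sub_add_cancel _ _) zeroProj_mul_self zeroProj_isHermitian
    (zeroProj_mul_contraction hN s) (auxSymbol_mul_conjTranspose hN s A A') hC hpC hπa hπb
    (hbQ s hs) hE hR ((hcS s hs).trans hS) ((hcZ s hs).trans hZ) ((hcJ s hs).trans hJ)
    hM hH hHQ hlow hup
  · simp only [πa, πb, conjTranspose_fromCols_eq_fromRows_conjTranspose, conjTranspose_one,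
      conjTranspose_zero, fromRows_mul_fromCols]
    simp [fromBlocks_add, fromBlocks_one]
  · simp only [πa, πb, fromCols_mul_fromBlocks, mul_fromCols]
    ext i (j | j) <;> simp
  · simp only [πa, πb, fromCols_mul_fromBlocks, mul_fromCols]
    ext i (j | j) <;> simp

end UniformBounds

/-- for `N ≥ 2`, FTNS strong hyperbolicity implies the existence of a
strongly hyperbolic FT(N-1)S reduction; one may take the partial choice
`(D⁰)^k = -(A⁰₀)^k`, `Dᵢ^k = -B⁰₁₀ δᵢ^k`, `(D^μ) = -(B^μ₁₀)`, all `D̄` zero except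
`D̄ᵢ^{kj} = iλ εᵢ^{kj}` with `λ` exceeding the operator norm of `P_N(s)` for all unit
`s`; then `P_{N-1}(s)` is uniformly diagonalizable with real eigenvalues.  In particular
the system is FT(N-1)S strongly hyperbolic. -/
theorem stmt_5 (hN : 2 ≤ N)
    (M : ℝ) (hM : 0 < M)
    (HN : (Fin 3 → ℝ) → Matrix (IN N n) (IN N n) ℂ)
    (hHN : ∀ s : Fin 3 → ℝ, (∑ i, s i ^ 2) = 1 →
      (HN s).IsHermitian ∧
      HN s * PN N n A A' s = (PN N n A A' s)ᴴ * HN s ∧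
      loewnerLE (((M⁻¹ : ℝ) : ℂ) • 1) (HN s) ∧
      loewnerLE (HN s) (((M : ℝ) : ℂ) • 1)) :
    ∃ lam : ℝ,
      (∀ s : Fin 3 → ℝ, (∑ i, s i ^ 2) = 1 → matOpNorm (PN N n A A' s) < lam) ∧
      ∃ K : ℝ, 0 < K ∧
        (∀ s : Fin 3 → ℝ, (∑ i, s i ^ 2) = 1 →
          ∃ T Tinv : Matrix (INm1 N n) (INm1 N n) ℂ,
            T * Tinv = 1 ∧ Tinv * T = 1 ∧ matOpNorm T ≤ K ∧ matOpNorm Tinv ≤ K ∧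
            ∃ Λ : INm1 N n → ℝ,
              Tinv *
                  PNm1 N n A A' B10
                    (fun k => -(A 0 0 (fun _ => k)))
                    (fun _ _ => 0)
                    (fun i k => if i = k then -(B10 0 Fin.elim0) else 0)
                    (fun i k j => (Complex.I * (lam : ℂ) * (lev i k j : ℂ)) •
                      (1 : Matrix (Fin (n 0)) (Fin (n 0)) ℂ))
                    (fun μ K' => -(B10 μ K'))
                    (fun _ _ _ _ => 0) s * T
                = Matrix.diagonal (fun r => (Λ r : ℂ))) ∧
        (∃ M2 : ℝ, 0 < M2 ∧ ∀ s : Fin 3 → ℝ, (∑ i, s i ^ 2) = 1 →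
          ∃ H2 : Matrix (INm1 N n) (INm1 N n) ℂ,
            H2.IsHermitian ∧
            H2 * PNm1 N n A A' B10
                (fun k => -(A 0 0 (fun _ => k))) (fun _ _ => 0)
                (fun i k => if i = k then -(B10 0 Fin.elim0) else 0)
                (fun i k j => (Complex.I * (lam : ℂ) * (lev i k j : ℂ)) •
                  (1 : Matrix (Fin (n 0)) (Fin (n 0)) ℂ))
                (fun μ K' => -(B10 μ K')) (fun _ _ _ _ => 0) s
              = (PNm1 N n A A' B10
                  (fun k => -(A 0 0 (fun _ => k))) (fun _ _ => 0)
                  (fun i k => if i = k then -(B10 0 Fin.elim0) else 0)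
                  (fun i k j => (Complex.I * (lam : ℂ) * (lev i k j : ℂ)) •
                    (1 : Matrix (Fin (n 0)) (Fin (n 0)) ℂ))
                  (fun μ K' => -(B10 μ K')) (fun _ _ _ _ => 0) s)ᴴ * H2 ∧
            loewnerLE (((M2⁻¹ : ℝ) : ℂ) • 1) H2 ∧
            loewnerLE H2 (((M2 : ℝ) : ℂ) • 1)) := by
  have hN0 : 0 < N := by omega
  obtain ⟨p, hp⟩ := exists_forall_matOpNorm_PN_le (N := N) A A'
  obtain ⟨M2, hM2, hsymm⟩ := exists_uniform_symmetrizer_PNm1 A A' hN0 B10 hM hp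
  have hsymm' := fun (s : Fin 3 → ℝ) (hs : ∑ i, s i ^ 2 = 1) =>
    hsymm s (HN s) hs (hHN s hs).1 (hHN s hs).2.1 (hHN s hs).2.2.1 (hHN s hs).2.2.2
  refine ⟨p + 1, fun s hs => lt_add_of_le_of_pos (hp s hs) one_pos, √M2,
    Real.sqrt_pos.mpr hM2, fun s hs => ?_, M2, hM2, hsymm'⟩
  obtain ⟨H2, hH2, hHP, hlow, hup⟩ := hsymm' s hs
  exact exists_diagonalization_of_symmetrizer hM2 hH2 hHP hlow hup
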